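/- arXiv:1604.02597 — 3 statements merged into one kernel-verified Lean document; each statement's English description precedes it below -/
import Mathlib

section
/- The system is rigid along the height sequence: for every σ-invariant Borel probability measure μ on X and every Borel set A ⊆ X, μ(σ^{h k}(A) Δ A) → 0 as k → ∞, where Δ denotes symmetric difference. -/
open MeasureTheory Filter Topology
open scoped ENNReal

/-- `m`-fold concatenation of a word. -/
def wordPow (w : List ℕ) (m : ℕ) : List ℕ := (List.replicate m w).flatten

/-- The words of the generalized del Junco–Rudolph construction:
`B 0 = [0]`, `B (k+1) = (B k)^(a·b^k) ++ [1] ++ (B k)^((b-a)·b^k)`. -/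
def Bword (b a : ℕ) : ℕ → List ℕ
  | 0 => [0]
  | k + 1 => wordPow (Bword b a k) (a * b ^ k) ++ [1] ++ wordPow (Bword b a k) ((b - a) * b ^ k)

/-- The height sequence: `h 0 = 1`, `h (k+1) = b^(k+1) * h k + 1`. -/
def hseq (b : ℕ) : ℕ → ℕ
  | 0 => 1
  | k + 1 => b ^ (k + 1) * hseq b k + 1

/-- The word `w` occurs in the word `v` at position `p` (0-based). -/
def OccursAt (w v : List ℕ) (p : ℕ) : Prop :=
  p + w.length ≤ v.length ∧ (v.drop p).take w.length = w

/-- The block of `x` of length `w.length` starting at index `m` equals the word `w`. -/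
def BlockEq (x : ℤ → ℕ) (m : ℤ) (w : List ℕ) : Prop :=
  ∀ i : ℕ, i < w.length → x (m + i) = w.getD i 0

/-- Membership in the subshift `X`: every finite block of `x` occurs as a consecutive
subword of some `B k`. -/
def InX (b a : ℕ) (x : ℤ → ℕ) : Prop :=
  ∀ (m : ℤ) (l : ℕ), ∃ k p, OccursAt (List.ofFn fun i : Fin l => x (m + (i : ℕ))) (Bword b a k) p

/-- The left shift `(σ x) n = x (n+1)` on `{0,1}^ℤ`. -/
def shiftMap (x : ℤ → ℕ) : ℤ → ℕ := fun n => x (n + 1)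

/-!
Call `i` a mismatch of `x` at distance `h` if `x i ≠ x (i + h)`. For `h = h k`, a point of `X` is a
concatenation of copies of `B k` and isolated spacers, with at least `b ^ k` copies of `B k` between
consecutive spacers. Every mismatch at distance `h` sees a spacer within `[i, i + h]`, so two
mismatches are either within `h` of each other or about `b ^ k * h` apart. Hence roughly `b ^ k / 2`
translates of the event `x n ≠ x (n + h)` are disjoint modulo `μ`, and its measure tends to `0`.
This is rigidity for sets depending on one coordinate; the sets along which a sequence of
measure-preserving maps is rigid form a σ-algebra, so it extends to all Borel sets.
-/

open scoped symmDiff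

section Rigidity

variable {ι Ω : Type*} [MeasurableSpace Ω] {μ : Measure Ω} {T : ι → Ω → Ω} {l : Filter ι}
  {A B : Set Ω}

/-- The set `A` is asymptotically invariant under the maps `T i` as `i` tends along `l`; a system is
rigid along a sequence of times when this holds for the corresponding iterates and every measurable
`A`. Preimages are used so that the maps need not be invertible. -/
def IsRigidAlong (μ : Measure Ω) (T : ι → Ω → Ω) (l : Filter ι) (A : Set Ω) : Prop :=
  Tendsto (fun i => μ ((T i ⁻¹' A) ∆ A)) l (𝓝 0)

namespace IsRigidAlong

lemma empty : IsRigidAlong μ T l ∅ := by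
  simpa [IsRigidAlong] using tendsto_const_nhds

lemma compl (hA : IsRigidAlong μ T l A) : IsRigidAlong μ T l Aᶜ := by
  simpa only [IsRigidAlong, Set.preimage_compl, compl_symmDiff_compl] using hA

lemma union (hA : IsRigidAlong μ T l A) (hB : IsRigidAlong μ T l B) :
    IsRigidAlong μ T l (A ∪ B) := by
  have hsum := Tendsto.add hA hB
  rw [add_zero] at hsum
  refine tendsto_of_tendsto_of_tendsto_of_le_of_le tendsto_const_nhds hsum (fun _ => zero_le)
    fun i => (measure_mono ?_).trans (measure_union_le _ _)
  exact Set.union_symmDiff_union_subset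

lemma of_forall_exists_measure_symmDiff_le (hT : ∀ i, MeasurePreserving (T i) μ μ)
    (hA : NullMeasurableSet A μ)
    (happrox : ∀ ε > 0, ∃ C, NullMeasurableSet C μ ∧ IsRigidAlong μ T l C ∧ μ (A ∆ C) ≤ ε) :
    IsRigidAlong μ T l A := by
  refine ENNReal.tendsto_nhds_zero.2 fun ε hε => ?_
  have hε3 : 0 < ε / 3 := ENNReal.div_pos hε.ne' (by simp)
  obtain ⟨C, hC, hrigid, hAC⟩ := happrox (ε / 3) hε3
  filter_upwards [ENNReal.tendsto_nhds_zero.1 hrigid _ hε3] with i hi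
  have hpre : μ ((T i ⁻¹' A) ∆ (T i ⁻¹' C)) = μ (A ∆ C) := by
    rw [← Set.preimage_symmDiff, (hT i).measure_preimage (hA.symmDiff hC)]
  calc μ ((T i ⁻¹' A) ∆ A)
      ≤ μ ((T i ⁻¹' A) ∆ (T i ⁻¹' C)) + (μ ((T i ⁻¹' C) ∆ C) + μ (C ∆ A)) :=
        (measure_symmDiff_le _ (T i ⁻¹' C) _).trans (by gcongr; exact measure_symmDiff_le _ C _)
    _ ≤ ε / 3 + (ε / 3 + ε / 3) := by
        rw [hpre, symmDiff_comm C A]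
        gcongr
    _ = ε := by rw [← add_assoc, ENNReal.add_thirds]

lemma iUnion [IsFiniteMeasure μ] (hT : ∀ i, MeasurePreserving (T i) μ μ) {f : ℕ → Set Ω}
    (hmeas : ∀ n, MeasurableSet (f n)) (hf : ∀ n, IsRigidAlong μ T l (f n)) :
    IsRigidAlong μ T l (⋃ n, f n) := by
  have hacc_meas (n : ℕ) : MeasurableSet (Set.accumulate f n) :=
    MeasurableSet.biUnion (Set.to_countable _) fun m _ => hmeas m
  have hacc_rigid (n : ℕ) : IsRigidAlong μ T l (Set.accumulate f n) := by
    induction n with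
    | zero => simpa using hf 0
    | succ n ih => exact Set.accumulate_succ f n ▸ ih.union (hf _)
  refine of_forall_exists_measure_symmDiff_le hT (MeasurableSet.iUnion hmeas).nullMeasurableSet
    fun ε hε => ?_
  have hlim := ENNReal.Tendsto.sub (tendsto_const_nhds (x := μ (⋃ n, f n)))
    (tendsto_measure_iUnion_accumulate (μ := μ) (f := f)) (.inl (measure_ne_top _ _))
  rw [tsub_self] at hlim
  obtain ⟨n, hn⟩ := (ENNReal.tendsto_nhds_zero.1 hlim ε hε).exists
  refine ⟨Set.accumulate f n, (hacc_meas n).nullMeasurableSet, hacc_rigid n, ?_⟩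
  have hsub : Set.accumulate f n ⊆ ⋃ m, f m := Set.accumulate_subset_iUnion n
  rwa [symmDiff_of_ge hsub,
    measure_sdiff hsub (hacc_meas n).nullMeasurableSet (measure_ne_top _ _)]

theorem of_generateFrom [IsFiniteMeasure μ] (hT : ∀ i, MeasurePreserving (T i) μ μ)
    {C : Set (Set Ω)} (hgen : ‹MeasurableSpace Ω› = MeasurableSpace.generateFrom C)
    (hC : ∀ s ∈ C, IsRigidAlong μ T l s) (hA : MeasurableSet A) : IsRigidAlong μ T l A := by
  rw [hgen] at hA
  induction A, hA using MeasurableSpace.generateFrom_induction with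
  | hC s hs _ => exact hC s hs
  | empty => exact empty
  | compl s _ ih => exact ih.compl
  | iUnion f hf ih => exact iUnion hT (fun n => hgen ▸ hf n) ih

end IsRigidAlong

lemma measure_image_symmDiff_eq_preimage (e : Ω ≃ᵐ Ω) (he : MeasurePreserving e μ μ) (A : Set Ω) :
    μ ((e '' A) ∆ A) = μ ((e ⁻¹' A) ∆ A) := by
  rw [← he.measure_preimage_equiv, Set.preimage_symmDiff, e.injective.preimage_image,
    symmDiff_comm]

lemma card_mul_measure_le_measure_univ (hT : ∀ i, MeasurePreserving (T i) μ μ)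
    (hA : NullMeasurableSet A μ) {s : Finset ι}
    (hdisj : (s : Set ι).Pairwise (Function.onFun (AEDisjoint μ) fun i => T i ⁻¹' A)) :
    s.card * μ A ≤ μ Set.univ :=
  calc s.card * μ A = ∑ i ∈ s, μ (T i ⁻¹' A) := by
        simp only [(hT _).measure_preimage hA, Finset.sum_const, nsmul_eq_mul]
    _ ≤ μ Set.univ := sum_measure_le_measure_univ
        (fun i _ => hA.preimage (hT i).quasiMeasurePreserving) hdisj

lemma tendsto_zero_of_forall_eventually_mul_le {f : ι → ℝ≥0∞}
    {C : ℝ≥0∞} (hC : C ≠ ∞) (hf : ∀ M : ℕ, ∀ᶠ i in l, M * f i ≤ C) : Tendsto f l (𝓝 0) := by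
  refine ENNReal.tendsto_nhds_zero.2 fun ε hε => ?_
  obtain ⟨M, hM⟩ := ENNReal.exists_nat_mul_gt hε.ne' hC
  filter_upwards [hf M] with i hi
  by_contra! hlt
  exact (hM.trans_le (by gcongr)).not_ge hi

end Rigidity

section Shift

variable {α : Type*} [MeasurableSpace α]

/-- Translation of bi-infinite sequences by `h`, i.e. the `h`-th power of the left shift. -/
def shiftEquiv (h : ℤ) : (ℤ → α) ≃ᵐ (ℤ → α) where
  toFun x n := x (n + h)
  invFun x n := x (n - h)
  left_inv x := by simp
  right_inv x := by simp
  measurable_toFun := measurable_pi_lambda _ fun _ => measurable_pi_apply _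
  measurable_invFun := measurable_pi_lambda _ fun _ => measurable_pi_apply _

@[simp]
lemma shiftEquiv_apply (h : ℤ) (x : ℤ → α) (n : ℤ) : shiftEquiv h x n = x (n + h) := rfl

lemma iterate_shiftEquiv_one (h : ℕ) : (shiftEquiv 1 : (ℤ → α) → ℤ → α)^[h] = shiftEquiv h := by
  induction h with
  | zero => ext x n; simp
  | succ h ih =>
    ext x n
    rw [Function.iterate_succ_apply', ih]
    simp only [shiftEquiv_apply, Nat.cast_succ]
    congr 1
    ring

lemma measurePreserving_shiftEquiv {μ : Measure (ℤ → α)}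
    (hinv : MeasurePreserving (shiftEquiv 1) μ μ) (h : ℕ) :
    MeasurePreserving (shiftEquiv h) μ μ :=
  iterate_shiftEquiv_one (α := α) h ▸ hinv.iterate h

lemma measurableSet_mismatch [MeasurableEq α] (m n : ℤ) : MeasurableSet {x : ℤ → α | x m ≠ x n} :=
  (measurableSet_eq_fun (measurable_pi_apply m) (measurable_pi_apply n)).compl

theorem isRigidAlong_shiftEquiv_of_tendsto_mismatch {μ : Measure (ℤ → α)} [IsFiniteMeasure μ]
    {ι : Type*} {l : Filter ι}
    (hinv : MeasurePreserving (shiftEquiv 1) μ μ) {h : ι → ℕ}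
    (hmis : ∀ n : ℤ, Tendsto (fun i => μ {x | x n ≠ x (n + h i)}) l (𝓝 0))
    {A : Set (ℤ → α)} (hA : MeasurableSet A) :
    IsRigidAlong μ (fun i => shiftEquiv (h i)) l A := by
  refine IsRigidAlong.of_generateFrom (fun i => measurePreserving_shiftEquiv hinv (h i))
    MeasurableSpace.pi_eq_generateFrom_projections ?_ hA
  rintro _ ⟨n, s, -, rfl⟩
  refine tendsto_of_tendsto_of_tendsto_of_le_of_le tendsto_const_nhds (hmis n)
    (fun _ => zero_le) fun i => measure_mono fun x hx hxn => ?_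
  simp only [Set.mem_symmDiff, Set.mem_preimage, Function.eval, shiftEquiv_apply, ← hxn] at hx
  tauto

end Shift

section Mismatch

variable {α : Type*} {h G i : ℕ} {u v w : List α}

/-- The letters of `w` at positions `i` and `i + h` both exist and differ. -/
def IsMismatch (h : ℕ) (w : List α) (i : ℕ) : Prop :=
  i + h < w.length ∧ w[i]? ≠ w[i + h]?

lemma isMismatch_append_iff_left (hi : i + h < v.length) :
    IsMismatch h (v ++ w) i ↔ IsMismatch h v i := by
  rw [IsMismatch, IsMismatch, List.getElem?_append_left hi, List.getElem?_append_left (by omega),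
    List.length_append]
  simp only [hi, show i + h < v.length + w.length by omega]

lemma isMismatch_append_iff_right :
    IsMismatch h (v ++ w) (v.length + i) ↔ IsMismatch h w i := by
  rw [IsMismatch, IsMismatch, List.getElem?_append_right (by omega),
    List.getElem?_append_right (by omega), List.length_append, add_assoc, add_lt_add_iff_left,
    Nat.add_sub_cancel_left, Nat.add_sub_cancel_left]

lemma IsMismatch.infix (hi : IsMismatch h v i) (u w : List α) :
    IsMismatch h (u ++ v ++ w) (u.length + i) := by
  rw [List.append_assoc, isMismatch_append_iff_right]
  exact (isMismatch_append_iff_left hi.1).2 hi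

lemma isMismatch_append (hv : u <:+ v) (hw : u <+: w) (hi : IsMismatch u.length (v ++ w) i) :
    IsMismatch u.length v i ∨ ∃ j, i = v.length + j ∧ IsMismatch u.length w j := by
  rcases lt_or_ge (i + u.length) v.length with hlt | hge
  · exact .inl ((isMismatch_append_iff_left hlt).1 hi)
  rcases lt_or_ge i v.length with hlt | hge'
  · obtain ⟨v', rfl⟩ := hv
    obtain ⟨w', rfl⟩ := hw
    rw [List.length_append] at hge hlt
    obtain ⟨r, rfl⟩ := Nat.exists_eq_add_of_le (show v'.length ≤ i by omega)
    have hr : r < u.length := by omega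
    refine absurd ?_ hi.2
    have hleft : (v' ++ (u ++ (u ++ w')))[v'.length + r]? = u[r]? := by
      rw [List.getElem?_append_right (by omega), Nat.add_sub_cancel_left,
        List.getElem?_append_left hr]
    have hright : (v' ++ (u ++ (u ++ w')))[v'.length + r + u.length]? = u[r]? := by
      rw [List.getElem?_append_right (by omega), add_assoc, Nat.add_sub_cancel_left,
        List.getElem?_append_right (by omega), Nat.add_sub_cancel, List.getElem?_append_left hr]
    rw [List.append_assoc, hleft, hright]
  · obtain ⟨j, rfl⟩ := Nat.exists_eq_add_of_le hge'
    exact .inr ⟨j, rfl, isMismatch_append_iff_right.1 hi⟩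

lemma isMismatch_append_singleton_append {s : α} (hi : IsMismatch h (v ++ [s] ++ w) i) :
    IsMismatch h v i ∨ (v.length ≤ i + h ∧ i ≤ v.length) ∨
      ∃ j, i = v.length + 1 + j ∧ IsMismatch h w j := by
  rcases lt_or_ge (i + h) v.length with hlt | hge
  · rw [List.append_assoc] at hi
    exact .inl ((isMismatch_append_iff_left hlt).1 hi)
  rcases le_or_gt i v.length with hle | hgt
  · exact .inr (.inl ⟨hge, hle⟩)
  · obtain ⟨j, rfl⟩ := Nat.exists_eq_add_of_le hgt
    have hlen : v.length + 1 = (v ++ [s]).length := by simp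
    rw [Nat.succ_eq_add_one, hlen] at hi
    exact .inr (.inr ⟨j, rfl, isMismatch_append_iff_right.1 hi⟩)

/-- The word `w` starts and ends with `u`, and its mismatches at distance `u.length` form clusters
of diameter at most `u.length`. A cluster is thought of as the positions `i` with
`i ≤ c ≤ i + u.length` for a spacer at `c`; consecutive spacers are more than `G` apart and those
nearest to the ends leave at least `G` letters on either side. The spacers are not part of the data:
the bounds are stated for the mismatches themselves. -/
structure IsSparselyMismatched (u : List α) (G : ℕ) (w : List α) : Prop where
  isPrefix : u <+: w
  isSuffix : u <:+ w
  le_add_length {i : ℕ} : IsMismatch u.length w i → G ≤ i + u.length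
  add_lt_length {i : ℕ} : IsMismatch u.length w i → i + G < w.length
  add_lt_add_length {i j : ℕ} : IsMismatch u.length w i → IsMismatch u.length w j →
    i + u.length < j → i + G < j + u.length

namespace IsSparselyMismatched

lemma refl (u : List α) (G : ℕ) : IsSparselyMismatched u G u where
  isPrefix := List.prefix_rfl
  isSuffix := List.suffix_rfl
  le_add_length hi := absurd hi.1 (by omega)
  add_lt_length hi := absurd hi.1 (by omega)
  add_lt_add_length hi := absurd hi.1 (by omega)

lemma append (hv : IsSparselyMismatched u G v) (hw : IsSparselyMismatched u G w) :
    IsSparselyMismatched u G (v ++ w) where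
  isPrefix := hv.isPrefix.trans (List.prefix_append v w)
  isSuffix := hw.isSuffix.trans (List.suffix_append v w)
  le_add_length hi := by
    rcases isMismatch_append hv.isSuffix hw.isPrefix hi with hi' | ⟨i', rfl, hi'⟩
    · exact hv.le_add_length hi'
    · have := hw.le_add_length hi'
      omega
  add_lt_length hi := by
    rw [List.length_append]
    rcases isMismatch_append hv.isSuffix hw.isPrefix hi with hi' | ⟨i', rfl, hi'⟩
    · have := hv.add_lt_length hi'
      omega
    · have := hw.add_lt_length hi'
      omega
  add_lt_add_length hi hj hij := by
    rcases isMismatch_append hv.isSuffix hw.isPrefix hi with hi' | ⟨i', rfl, hi'⟩ <;>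
    rcases isMismatch_append hv.isSuffix hw.isPrefix hj with hj' | ⟨j', rfl, hj'⟩
    · exact hv.add_lt_add_length hi' hj' hij
    · have := hv.add_lt_length hi'
      omega
    · have := hj'.1
      omega
    · have := hw.add_lt_add_length hi' hj' (by omega)
      omega

lemma append_singleton_append (hv : IsSparselyMismatched u G v) (hw : IsSparselyMismatched u G w)
    (hGv : G ≤ v.length) (hGw : G ≤ w.length) (s : α) :
    IsSparselyMismatched u G (v ++ [s] ++ w) where
  isPrefix := hv.isPrefix.trans (List.append_assoc v [s] w ▸ List.prefix_append v ([s] ++ w))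
  isSuffix := hw.isSuffix.trans (List.suffix_append (v ++ [s]) w)
  le_add_length hi := by
    rcases isMismatch_append_singleton_append hi with hi' | hi' | ⟨i', rfl, -⟩
    · exact hv.le_add_length hi'
    · omega
    · omega
  add_lt_length hi := by
    simp only [List.length_append, List.length_singleton]
    rcases isMismatch_append_singleton_append hi with hi' | hi' | ⟨i', rfl, hi'⟩
    · have := hv.add_lt_length hi'
      omega
    · omega
    · have := hw.add_lt_length hi'
      omega
  add_lt_add_length hi hj hij := by
    rcases isMismatch_append_singleton_append hi with hi' | hi' | ⟨i', rfl, hi'⟩ <;>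
    rcases isMismatch_append_singleton_append hj with hj' | hj' | ⟨j', rfl, hj'⟩
    · exact hv.add_lt_add_length hi' hj' hij
    · have := hv.add_lt_length hi'
      omega
    · have := hv.add_lt_length hi'
      omega
    · have := hj'.1
      omega
    · omega
    · have := hw.le_add_length hj'
      omega
    · have := hj'.1
      omega
    · omega
    · have := hw.add_lt_add_length hi' hj' (by omega)
      omega

lemma flatten_replicate (hw : IsSparselyMismatched u G w) {m : ℕ} (hm : 1 ≤ m) :
    IsSparselyMismatched u G (List.replicate m w).flatten := by
  induction m, hm using Nat.le_induction with
  | base => simpa using hw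
  | succ m _ ih => exact List.replicate_succ ▸ hw.append ih

end IsSparselyMismatched

end Mismatch

section SpacerConstruction

variable {α : Type*} {s : α} {p q : ℕ → ℕ} {W : ℕ → List α} {x : ℤ → α} {k N : ℕ}

/-- `W` is the sequence of words of a rank-one construction with a single spacer `s` per stage,
preceded by `p k` and followed by `q k` copies of the `k`-th word. -/
def IsSpacerConstruction (s : α) (p q : ℕ → ℕ) (W : ℕ → List α) : Prop :=
  ∀ k, W (k + 1) =
    (List.replicate (p k) (W k)).flatten ++ [s] ++ (List.replicate (q k) (W k)).flatten

/-- Membership in the subshift generated by the words `W k`: every finite block of `x` is a factor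
of some `W k`. -/
def InSubshift (W : ℕ → List α) (x : ℤ → α) : Prop :=
  ∀ (m : ℤ) (l : ℕ), ∃ k, (List.ofFn fun i : Fin l => x (m + (i : ℕ))) <:+: W k

lemma IsSpacerConstruction.isSparselyMismatched (hW : IsSpacerConstruction s p q W) (hN : 1 ≤ N)
    (hp : ∀ j ≥ k, N ≤ p j) (hq : ∀ j ≥ k, N ≤ q j) {K : ℕ} (hK : k ≤ K) :
    IsSparselyMismatched (W k) (N * (W k).length) (W K) := by
  induction K, hK using Nat.le_induction with
  | base => exact .refl _ _
  | succ K hK ih =>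
    have hlen {m : ℕ} (hm : N ≤ m) :
        N * (W k).length ≤ (List.replicate m (W K)).flatten.length := by
      rw [List.length_flatten, List.map_replicate, List.sum_replicate, smul_eq_mul]
      exact Nat.mul_le_mul hm ih.isPrefix.length_le
    rw [hW K]
    exact (ih.flatten_replicate (hN.trans (hp K hK))).append_singleton_append
      (ih.flatten_replicate (hN.trans (hq K hK))) (hlen (hp K hK)) (hlen (hq K hK)) s

lemma isPrefix_ofFn_of_le (f : ℕ → α) {l L : ℕ} (hl : l ≤ L) :
    (List.ofFn fun i : Fin l => f i) <+: List.ofFn fun i : Fin L => f i := by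
  obtain ⟨c, rfl⟩ := Nat.exists_eq_add_of_le hl
  rw [List.ofFn_add]
  exact List.prefix_append _ _

lemma InSubshift.exists_ge_isInfix (hx : InSubshift W x) (m : ℤ) (l k : ℕ) :
    ∃ K ≥ k, (List.ofFn fun i : Fin l => x (m + (i : ℕ))) <:+: W K := by
  -- A block longer than all of `W 0, …, W (k - 1)` can only occur in a later word.
  let L := l + (Finset.range k).sup (fun j => (W j).length) + 1
  obtain ⟨K, hK⟩ := hx m L
  refine ⟨K, ?_, (isPrefix_ofFn_of_le (fun i => x (m + i)) (by omega)).isInfix.trans hK⟩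
  by_contra! hlt
  have hle : (W K).length ≤ (Finset.range k).sup fun j => (W j).length :=
    Finset.le_sup (f := fun j => (W j).length) (Finset.mem_range.2 hlt)
  have hge := hK.length_le
  rw [List.length_ofFn] at hge
  omega

lemma InSubshift.lt_add_of_mismatch (hx : InSubshift W x) (hW : IsSpacerConstruction s p q W)
    (hN : 1 ≤ N) (hp : ∀ j ≥ k, N ≤ p j) (hq : ∀ j ≥ k, N ≤ q j) {i : ℤ} {d : ℕ}
    (hi : x i ≠ x (i + (W k).length)) (hid : x (i + d) ≠ x (i + d + (W k).length))
    (hd : (W k).length < d) : N * (W k).length < d + (W k).length := by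
  obtain ⟨K, hK, u, v, huv⟩ := hx.exists_ge_isInfix i (d + (W k).length + 1) k
  have hsparse := hW.isSparselyMismatched hN hp hq hK
  rw [← huv] at hsparse
  have hmis {r : ℕ} (hr : r ≤ d) (hne : x (i + r) ≠ x (i + r + (W k).length)) :
      IsMismatch (W k).length (u ++ (List.ofFn fun t : Fin (d + (W k).length + 1) =>
        x (i + (t : ℕ))) ++ v) (u.length + r) := by
    refine IsMismatch.infix ⟨by rw [List.length_ofFn]; omega, ?_⟩ u v
    rw [List.getElem?_ofFn, List.getElem?_ofFn, dif_pos (by omega), dif_pos (by omega)]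
    simpa [← add_assoc] using hne
  have := hsparse.add_lt_add_length (hmis (Nat.zero_le d) (by simpa using hi))
    (hmis le_rfl hid) (by omega)
  omega

lemma InSubshift.eq_of_mismatch_of_lt (hx : InSubshift W x) (hW : IsSpacerConstruction s p q W)
    {M : ℕ} (hp : ∀ j ≥ k, 2 * M + 1 ≤ p j) (hq : ∀ j ≥ k, 2 * M + 1 ≤ q j) {n : ℤ} {i j : ℕ}
    (hij : i < j) (hj : j < M) (hi : x (n + (i * ((W k).length + 1) : ℕ)) ≠
      x (n + (i * ((W k).length + 1) : ℕ) + (W k).length)) :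
    x (n + (j * ((W k).length + 1) : ℕ)) =
      x (n + (j * ((W k).length + 1) : ℕ) + (W k).length) := by
  obtain ⟨e, rfl⟩ := Nat.exists_eq_add_of_lt hij
  by_contra hne
  have hpos : 0 < (W k).length := Nat.pos_of_ne_zero fun h0 => hi (by simp [h0])
  have hstep : n + ((i + e + 1) * ((W k).length + 1) : ℕ) =
      n + (i * ((W k).length + 1) : ℕ) + ((e + 1) * ((W k).length + 1) : ℕ) := by
    push_cast
    ring
  rw [hstep] at hne
  have hfar := hx.lt_add_of_mismatch hW (by omega) hp hq hi hne (by nlinarith)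
  nlinarith

variable [MeasurableSpace α] [MeasurableEq α] {μ : Measure (ℤ → α)}

lemma mul_measure_mismatch_le (hsupp : ∀ᵐ x ∂μ, InSubshift W x)
    (hinv : MeasurePreserving (shiftEquiv 1) μ μ) (hW : IsSpacerConstruction s p q W) {M : ℕ}
    (hp : ∀ j ≥ k, 2 * M + 1 ≤ p j) (hq : ∀ j ≥ k, 2 * M + 1 ≤ q j) (n : ℤ) :
    M * μ {x | x n ≠ x (n + (W k).length)} ≤ μ Set.univ := by
  set E : Set (ℤ → α) := {x | x n ≠ x (n + (W k).length)}
  -- Distinct multiples of `(W k).length + 1` cannot both meet the same cluster of mismatches.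
  let T (j : ℕ) : (ℤ → α) → ℤ → α := shiftEquiv ((j * ((W k).length + 1) : ℕ) : ℤ)
  have hE (j : ℕ) (x : ℤ → α) : x ∈ T j ⁻¹' E ↔ x (n + (j * ((W k).length + 1) : ℕ)) ≠
      x (n + (j * ((W k).length + 1) : ℕ) + (W k).length) := by
    rw [add_right_comm]
    rfl
  have hdisj {i j : ℕ} (hij : i < j) (hj : j < M) : AEDisjoint μ (T i ⁻¹' E) (T j ⁻¹' E) := by
    refine measure_mono_null ?_ (ae_iff.1 hsupp)
    rintro x ⟨hxi, hxj⟩ hx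
    exact (hE j x).1 hxj (hx.eq_of_mismatch_of_lt hW hp hq hij hj ((hE i x).1 hxi))
  have hpairwise : (Finset.range M : Set ℕ).Pairwise
      (Function.onFun (AEDisjoint μ) fun j => T j ⁻¹' E) := by
    intro i hi j hj hij
    rcases hij.lt_or_gt with hlt | hgt
    · exact hdisj hlt (Finset.mem_range.1 hj)
    · exact (hdisj hgt (Finset.mem_range.1 hi)).symm
  simpa using card_mul_measure_le_measure_univ
    (fun j => measurePreserving_shiftEquiv hinv (j * ((W k).length + 1)))
    (measurableSet_mismatch n (n + (W k).length)).nullMeasurableSet hpairwise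

lemma tendsto_measure_mismatch [IsFiniteMeasure μ] (hsupp : ∀ᵐ x ∂μ, InSubshift W x)
    (hinv : MeasurePreserving (shiftEquiv 1) μ μ) (hW : IsSpacerConstruction s p q W)
    (hp : Tendsto p atTop atTop) (hq : Tendsto q atTop atTop) (n : ℤ) :
    Tendsto (fun k => μ {x | x n ≠ x (n + (W k).length)}) atTop (𝓝 0) := by
  refine tendsto_zero_of_forall_eventually_mul_le (measure_ne_top μ Set.univ) fun M => ?_
  filter_upwards [eventually_forall_ge_atTop.2 (hp.eventually_ge_atTop (2 * M + 1)),
    eventually_forall_ge_atTop.2 (hq.eventually_ge_atTop (2 * M + 1))] with k hpk hqk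
  exact mul_measure_mismatch_le hsupp hinv hW hpk hqk n

theorem rigid_along_heights_general [IsFiniteMeasure μ] (hsupp : ∀ᵐ x ∂μ, InSubshift W x)
    (hinv : MeasurePreserving (shiftEquiv 1) μ μ) (hW : IsSpacerConstruction s p q W)
    (hp : Tendsto p atTop atTop) (hq : Tendsto q atTop atTop)
    {A : Set (ℤ → α)} (hA : MeasurableSet A) :
    Tendsto (fun k => μ ((shiftEquiv (W k).length '' A) ∆ A)) atTop (𝓝 0) :=
  (isRigidAlong_shiftEquiv_of_tendsto_mismatch hinv
    (tendsto_measure_mismatch hsupp hinv hW hp hq) hA).congr fun _ =>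
      (measure_image_symmDiff_eq_preimage _ (measurePreserving_shiftEquiv hinv _) A).symm

end SpacerConstruction

lemma isSpacerConstruction_Bword (b a : ℕ) :
    IsSpacerConstruction 1 (fun k => a * b ^ k) (fun k => (b - a) * b ^ k) (Bword b a) :=
  fun _ => rfl

lemma length_Bword {b a : ℕ} (hab : a ≤ b) (k : ℕ) : (Bword b a k).length = hseq b k := by
  induction k with
  | zero => rfl
  | succ k ih =>
    obtain ⟨c, rfl⟩ := Nat.exists_eq_add_of_le hab
    simp only [Bword, wordPow, hseq, List.length_append, List.length_flatten, List.map_replicate,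
      List.sum_replicate, smul_eq_mul, List.length_singleton, ih, Nat.add_sub_cancel_left]
    ring

lemma OccursAt.isInfix {w v : List ℕ} {p : ℕ} (h : OccursAt w v p) : w <:+: v :=
  h.2 ▸ (List.take_prefix _ _).isInfix.trans (List.drop_suffix _ _).isInfix

lemma InX.inSubshift {b a : ℕ} {x : ℤ → ℕ} (hx : InX b a x) : InSubshift (Bword b a) x :=
  fun m l => (hx m l).imp fun _ ⟨_, hp⟩ => hp.isInfix

lemma tendsto_mul_pow_atTop {b c : ℕ} (hb : 2 ≤ b) (hc : 1 ≤ c) :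
    Tendsto (fun k => c * b ^ k) atTop atTop :=
  (tendsto_pow_atTop_atTop_of_one_lt hb).const_mul_atTop' hc

/-- rigidity along the heights: for every invariant Borel probability measure
`μ` on `X` and every Borel set `A`, `μ (σ^{h k} A ∆ A) → 0`. -/
theorem rigid_along_heights (b a : ℕ) (hb : 2 ≤ b) (ha1 : 1 ≤ a) (ha2 : a ≤ b - 1)
    (μ : Measure (ℤ → ℕ)) (hprob : IsProbabilityMeasure μ)
    (hsupp : μ {y | InX b a y}ᶜ = 0) (hinv : MeasurePreserving shiftMap μ μ)
    (A : Set (ℤ → ℕ)) (hA : MeasurableSet A) :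
    Tendsto (fun k => μ (symmDiff (shiftMap^[hseq b k] '' A) A)) atTop (𝓝 0) := by
  have hlim := rigid_along_heights_general (W := Bword b a)
    ((measure_eq_zero_iff_ae_notMem.1 hsupp).mono fun x hx => (not_not.1 hx).inSubshift) hinv
    (isSpacerConstruction_Bword b a) (tendsto_mul_pow_atTop hb ha1)
    (tendsto_mul_pow_atTop hb (by omega)) hA
  refine hlim.congr fun k => ?_
  rw [length_Bword (by omega), ← iterate_shiftEquiv_one]
  rfl
end

section
/- Let q ≥ 1 with gcd(b, q) = 1. Then the set { k ∈ ℕ : q divides h k } is infinite. -/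
open MeasureTheory Filter Topology
open scoped ENNReal

/-!
Since `b` is a unit modulo `q`, the height recursion is driven there by the skew product
`(x, y) ↦ (x * b, x * y + 1)` on `(ZMod q)ˣ × ZMod q`, an injective self-map of a finite set.
Its orbit of `(1, 0)` is `n ↦ (b ^ n, h (n - 1))` with the convention `h (-1) = 0`, so each of the
infinitely many returns to `(1, 0)` at a positive time `n` gives `q ∣ h (n - 1)`.
-/

section HeightStep

variable {R : Type*} [Semiring R]

/-- The skew product driving the height recursion: the first coordinate carries the current power
of `u`, which makes the recursion autonomous; it ranges over `Rˣ` so that the map is injective. -/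
def heightStep (u : Rˣ) (p : Rˣ × R) : Rˣ × R :=
  (p.1 * u, p.1 * p.2 + 1)

theorem heightStep_injective [IsRightCancelAdd R] (u : Rˣ) : Function.Injective (heightStep u) := by
  rintro ⟨x, y⟩ ⟨x', y'⟩ h
  obtain ⟨hx, hy⟩ := Prod.mk.inj h
  obtain rfl : x = x' := mul_right_cancel hx
  obtain rfl : y = y' := x.isUnit.mul_left_cancel (add_right_cancel hy)
  rfl

theorem heightStep_iterate_succ {b : ℕ} {u : Rˣ} (hu : (u : R) = b) (k : ℕ) :
    (heightStep u)^[k + 1] (1, 0) = (u ^ (k + 1), (hseq b k : R)) := by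
  induction k with
  | zero => simp [heightStep, hseq]
  | succ k ih =>
    rw [Function.iterate_succ_apply', ih]
    simp [heightStep, hseq, hu, pow_succ]

end HeightStep

theorem infinite_setOf_isPeriodicPt {α : Type*} {f : α → α} {x : α}
    (hx : x ∈ Function.periodicPts f) : {n : ℕ | Function.IsPeriodicPt f n x}.Infinite := by
  obtain ⟨p, hp, hpx⟩ := hx
  exact Set.infinite_of_injective_forall_mem (mul_right_injective₀ hp.ne') hpx.mul_const

theorem infinite_setOf_hseq_cast_eq_zero {R : Type*} [Ring R] [Finite R] {b : ℕ}
    (hb : IsUnit (b : R)) : {k : ℕ | (hseq b k : R) = 0}.Infinite := by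
  obtain ⟨u, hu⟩ := hb
  refine Set.infinite_of_forall_exists_gt fun n => ?_
  have hperiodic : ((1, 0) : Rˣ × R) ∈ Function.periodicPts (heightStep u) :=
    (heightStep_injective u).mem_periodicPts (1, 0)
  obtain ⟨m, hm, hnm⟩ := (infinite_setOf_isPeriodicPt hperiodic).exists_gt (n + 1)
  obtain ⟨k, rfl⟩ : ∃ k, m = k + 1 := Nat.exists_eq_add_one.2 (by lia)
  have hreturn : (u ^ (k + 1), (hseq b k : R)) = (1, 0) :=
    (heightStep_iterate_succ hu k).symm.trans hm
  exact ⟨k, congrArg Prod.snd hreturn, by lia⟩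

/-- if `gcd (b, q) = 1` then `q ∣ h k` for infinitely many `k`. -/
theorem infinitely_many_divisible (b : ℕ) (hb : 2 ≤ b) (q : ℕ) (hq : 1 ≤ q)
    (hbq : Nat.Coprime b q) :
    {k : ℕ | q ∣ hseq b k}.Infinite := by
  have : NeZero q := ⟨by lia⟩
  have hunit : IsUnit (b : ZMod q) := (ZMod.isUnit_iff_coprime b q).2 hbq
  simpa only [ZMod.natCast_eq_zero_iff] using infinite_setOf_hseq_cast_eq_zero hunit
end

section
/- For every integer q ≥ 1, the set { k ∈ ℕ : h (k+1) ≡ 1 (mod q) } is infinite. -/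
open MeasureTheory Filter Topology
open scoped ENNReal

/-!
Write `q = d * m` with `d ∣ b ^ N` and `m` coprime to `b`. The factor `d` divides `b ^ (k + 1)` as
soon as `N ≤ k + 1`. For the factor `m`, the pairs `(b ^ (k + 1), h k)` modulo `m` continue the
orbit of `(1, 0)` under a permutation of the finite set `(ZMod m)ˣ × ZMod m`. This orbit is purely
periodic, so it returns to `(1, 0)`, and `m ∣ h k` periodically in `k`.
-/

theorem exists_eq_mul_dvd_pow_isRelPrime {α : Type*} [CommMonoidWithZero α] [WfDvdMonoid α]
    {a : α} (b : α) (ha : a ≠ 0) :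
    ∃ (d m : α) (N : ℕ), a = d * m ∧ d ∣ b ^ N ∧ IsRelPrime b m := by
  induction a using (wellFounded_dvdNotUnit (α := α)).induction with
  | _ a ih =>
    by_cases hrel : IsRelPrime b a
    · exact ⟨1, a, 0, (one_mul a).symm, one_dvd _, hrel⟩
    · obtain ⟨c, hcb, ⟨r, rfl⟩, hc⟩ : ∃ c, c ∣ b ∧ c ∣ a ∧ ¬IsUnit c := by
        simpa only [IsRelPrime, not_forall, exists_prop] using hrel
      have hr : r ≠ 0 := right_ne_zero_of_mul ha
      obtain ⟨d, m, N, rfl, hd, hm⟩ := ih r ⟨hr, c, hc, mul_comm c r⟩ hr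
      refine ⟨c * d, m, N + 1, (mul_assoc c d m).symm, ?_, hm⟩
      rw [pow_succ']
      exact mul_dvd_mul hcb hd

section SkewProduct

variable {R : Type*} [Ring R]

/-- The affine skew product `(u, x) ↦ (u * v, u * x + 1)` over multiplication by the unit `v`. It
drives the recursion of `hseq`: the first coordinate records the current power of the base. -/
def skewProduct (v : Rˣ) : Equiv.Perm (Rˣ × R) :=
  Equiv.prodShear (Equiv.mulRight v) fun u ↦ u.mulLeft.trans (Equiv.addRight 1)

theorem skewProduct_apply (v u : Rˣ) (x : R) : skewProduct v (u, x) = (u * v, u * x + 1) := rfl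

theorem skewProduct_pow_succ_apply_one_zero {b : ℕ} {v : Rˣ} (hv : (v : R) = b) (k : ℕ) :
    (skewProduct v ^ (k + 1)) (1, 0) = (v ^ (k + 1), (hseq b k : R)) := by
  induction k with
  | zero => simp [skewProduct_apply, hseq]
  | succ k ih =>
    rw [pow_succ', Equiv.Perm.mul_apply, ih, skewProduct_apply, ← pow_succ]
    simp [hseq, hv]

theorem exists_pos_forall_dvd_hseq_cast_eq_zero [Finite R] {b : ℕ} (hb : IsUnit (b : R)) :
    ∃ n > 0, ∀ k, n ∣ k + 1 → (hseq b k : R) = 0 := by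
  obtain ⟨v, hv⟩ := hb
  refine ⟨orderOf (skewProduct v), orderOf_pos _, fun k hk ↦ ?_⟩
  have hreturn := skewProduct_pow_succ_apply_one_zero hv k
  rw [orderOf_dvd_iff_pow_eq_one.mp hk, Equiv.Perm.one_apply] at hreturn
  exact (congrArg Prod.snd hreturn).symm

end SkewProduct

theorem exists_pos_forall_dvd_hseq {b m : ℕ} (hm : m ≠ 0) (hbm : b.Coprime m) :
    ∃ n > 0, ∀ k, n ∣ k + 1 → m ∣ hseq b k := by
  have : NeZero m := ⟨hm⟩
  simpa only [ZMod.natCast_eq_zero_iff] using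
    exists_pos_forall_dvd_hseq_cast_eq_zero ((ZMod.isUnit_iff_coprime b m).mpr hbm)

theorem hseq_succ_modEq_one_iff {b q k : ℕ} :
    hseq b (k + 1) ≡ 1 [MOD q] ↔ q ∣ b ^ (k + 1) * hseq b k := by
  rw [hseq, ← Nat.modEq_zero_iff_dvd]
  exact Nat.ModEq.add_iff_right (Nat.ModEq.refl 1)

/-- for every `q ≥ 1`, `h (k+1) ≡ 1 (mod q)` for infinitely many `k`. -/
theorem infinitely_many_congruent_one (b : ℕ) (hb : 2 ≤ b) (q : ℕ) (hq : 1 ≤ q) :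
    {k : ℕ | hseq b (k + 1) ≡ 1 [MOD q]}.Infinite := by
  obtain ⟨d, m, N, rfl, hd, hbm⟩ :=
    exists_eq_mul_dvd_pow_isRelPrime b (Nat.one_le_iff_ne_zero.mp hq)
  obtain ⟨n, hn, hdvd⟩ := exists_pos_forall_dvd_hseq
    (Nat.ne_zero_of_mul_ne_zero_right (Nat.one_le_iff_ne_zero.mp hq))
    (Nat.coprime_iff_isRelPrime.mpr hbm)
  refine Set.infinite_of_forall_exists_gt fun M ↦ ?_
  obtain ⟨k, hk⟩ : ∃ k, n * (M + N + 2) = k + 1 :=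
    Nat.exists_eq_add_one.mpr (by positivity)
  have hle : M + N + 2 ≤ k + 1 := hk ▸ Nat.le_mul_of_pos_left _ hn
  have hpow : d ∣ b ^ (k + 1) := hd.trans (pow_dvd_pow b (by lia))
  have hheight : m ∣ hseq b k := hdvd k (hk ▸ dvd_mul_right n _)
  exact ⟨k, hseq_succ_modEq_one_iff.mpr (mul_dvd_mul hpow hheight), by lia⟩
end
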